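/- In any nondegenerate triangle, the distance from the circumcenter X3 to the incenter X1 and the distance from X3 to the Gergonne point X7 satisfy ((7 + 4√2)/17)·dist(X3, X7) ≤ dist(X3, X1) ≤ dist(X3, X7). -/

import Mathlib

/-- The point with normalized barycentric coordinates `(x : y : z)`
with respect to the triangle `A B C`. -/
noncomputable def bary (A B C : EuclideanSpace ℝ (Fin 2)) (x y z : ℝ) :
    EuclideanSpace ℝ (Fin 2) :=
  (x + y + z)⁻¹ • (x • A + y • B + z • C)

/-- The triangle center with barycentric coordinates
`(f a b c : f b c a : f c a b)` where `a, b, c` are the side lengths. -/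
noncomputable def tcenter (f : ℝ → ℝ → ℝ → ℝ) (A B C : EuclideanSpace ℝ (Fin 2)) :
    EuclideanSpace ℝ (Fin 2) :=
  bary A B C (f (dist B C) (dist C A) (dist A B))
    (f (dist C A) (dist A B) (dist B C))
    (f (dist A B) (dist B C) (dist C A))

/-!
For a triangle with circumradius `R`, inradius `r` and semiperimeter `s`, Leibniz's formula for the
distance to a weighted mean gives, with `O = X₃`, `I = X₁` and `G = X₇`,

  `OI² = R² - 2Rr`,  `OG² = R² - 4s²r(R + r) / (4R + r)²`.

The upper bound for `OI` follows from `3s² ≤ (4R + r)²` and Euler's inequality `2r ≤ R`.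
For the lower bound, Blundon's inequality bounds `s²` from below in terms of `R`, `r` and `OI`.
Inserting it and eliminating `r` through `2Rr = R² - OI²` makes the bound for `OG²` a square, so
`OG ≤ OI (4R² - R·OI - OI²) / (R (3R - OI))`, and the factor of `OI` is largest, with value
`7 - 4√2 = 17 / (7 + 4√2)`, when `OI = (3 - 2√2) R`.
-/

open Finset Real

section Leibniz

variable {ι V : Type*} [NormedAddCommGroup V] [InnerProductSpace ℝ V]

theorem norm_sq_sum_smul (t : Finset ι) (w : ι → ℝ) (v : ι → V) :
    ‖∑ i ∈ t, w i • v i‖ ^ 2 =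
      (∑ i ∈ t, w i) * ∑ i ∈ t, w i * ‖v i‖ ^ 2 -
        (∑ i ∈ t, ∑ j ∈ t, w i * w j * ‖v i - v j‖ ^ 2) / 2 := by
  have polarization (i j : ι) : inner ℝ (w i • v i) (w j • v j) =
      (w i * ‖v i‖ ^ 2 * w j + w i * (w j * ‖v j‖ ^ 2) - w i * w j * ‖v i - v j‖ ^ 2) / 2 := by
    rw [real_inner_smul_left, real_inner_smul_right, norm_sub_sq_real]
    ring
  rw [← real_inner_self_eq_norm_sq]
  simp only [sum_inner, inner_sum]
  rw [sum_comm]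
  simp only [polarization, ← sum_div, sum_sub_distrib, sum_add_distrib, ← mul_sum, ← sum_mul]
  ring

theorem dist_sq_centerMass {t : Finset ι} {w : ι → ℝ} (hw : ∑ i ∈ t, w i ≠ 0) (z : ι → V) (p : V) :
    dist p (t.centerMass w z) ^ 2 =
      (∑ i ∈ t, w i * dist p (z i) ^ 2) / ∑ i ∈ t, w i -
        (∑ i ∈ t, ∑ j ∈ t, w i * w j * dist (z i) (z j) ^ 2) / (2 * (∑ i ∈ t, w i) ^ 2) := by
  have centerMass_sub : t.centerMass w z - p = (∑ i ∈ t, w i)⁻¹ • ∑ i ∈ t, w i • (z i - p) := by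
    simp only [centerMass, smul_sub, sum_sub_distrib, ← sum_smul, inv_smul_smul₀ hw]
  rw [dist_comm, dist_eq_norm, centerMass_sub, norm_smul, mul_pow, norm_sq_sum_smul]
  simp only [dist_eq_norm, norm_sub_rev p, sub_sub_sub_cancel_right, norm_inv, inv_pow,
    norm_eq_abs, sq_abs]
  field_simp

theorem dist_sq_centerMass_triple {x y z : ℝ} (hs : x + y + z ≠ 0) (A B C P : V) :
    dist P (univ.centerMass ![x, y, z] ![A, B, C]) ^ 2 =
      (x * dist P A ^ 2 + y * dist P B ^ 2 + z * dist P C ^ 2) / (x + y + z) -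
        (y * z * dist B C ^ 2 + z * x * dist C A ^ 2 + x * y * dist A B ^ 2) /
          (x + y + z) ^ 2 := by
  have hw : ∑ i, ![x, y, z] i ≠ 0 := by simpa [Fin.sum_univ_three] using hs
  rw [dist_sq_centerMass hw]
  simp only [Fin.sum_univ_three, Matrix.cons_val, dist_self, dist_comm B A, dist_comm C B,
    dist_comm A C]
  field_simp
  ring

end Leibniz

/-- `a`, `b`, `c` are the side lengths of a nondegenerate triangle; positivity of the sides follows
from the three strict triangle inequalities. -/
structure IsTriangle (a b c : ℝ) : Prop where
  lt_add_left : a < b + c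
  lt_add_mid : b < c + a
  lt_add_right : c < a + b

/-- Half the perimeter of a triangle with sides `a`, `b`, `c`. -/
noncomputable def semiperimeter (a b c : ℝ) : ℝ := (a + b + c) / 2

/-- The radius of the incircle of a triangle with sides `a`, `b`, `c`: Heron's area divided by the
semiperimeter. -/
noncomputable def inradius (a b c : ℝ) : ℝ :=
  √((semiperimeter a b c - a) * (semiperimeter a b c - b) * (semiperimeter a b c - c) /
    semiperimeter a b c)

/-- The radius of the circumcircle of a triangle with sides `a`, `b`, `c`, given by `abc = 4Rrs`. -/
noncomputable def circumradius (a b c : ℝ) : ℝ :=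
  a * b * c / (4 * inradius a b c * semiperimeter a b c)

theorem sub_gergonne_term_eq_sq {R r d : ℝ} (hR : 0 < R) (hdR : d < R)
    (hd_sq : d ^ 2 = R * (R - 2 * r)) :
    R ^ 2 - 4 * (2 * R ^ 2 + 10 * R * r - r ^ 2 - 2 * (R - 2 * r) * d) * r * (R + r) /
        (4 * R + r) ^ 2 =
      ((4 * R ^ 2 - R * d - d ^ 2) / (R * (3 * R - d)) * d) ^ 2 := by
  obtain rfl : r = (R ^ 2 - d ^ 2) / (2 * R) := by field_simp; linarith
  have hsub : R * 3 - d ≠ 0 := (show 0 < R * 3 - d by linarith).ne'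
  have hsum : 4 * R + (R ^ 2 - d ^ 2) / (2 * R) = (3 * R - d) * (3 * R + d) / (2 * R) := by
    field_simp
    ring
  have hBlundon : 2 * R ^ 2 + 10 * R * ((R ^ 2 - d ^ 2) / (2 * R)) -
      ((R ^ 2 - d ^ 2) / (2 * R)) ^ 2 - 2 * (R - 2 * ((R ^ 2 - d ^ 2) / (2 * R))) * d =
        (R - d) * (3 * R + d) ^ 3 / (4 * R ^ 2) := by
    field_simp
    ring
  rw [hsum, hBlundon]
  field_simp
  ring

/-- The difference of the two sides is a multiple of `(d - (3 - 2√2) R) ^ 2`. -/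
theorem div_le_seven_sub {R d : ℝ} (hR : 0 < R) (hd : d < 3 * R) :
    (4 * R ^ 2 - R * d - d ^ 2) / (R * (3 * R - d)) ≤ 7 - 4 * √2 := by
  have hsub : 0 < 3 * R - d := by linarith
  have h2 : √2 ^ 2 = 2 := sq_sqrt zero_le_two
  have hsq : (7 - 4 * √2) * (R * (3 * R - d)) - (4 * R ^ 2 - R * d - d ^ 2) =
      (d - (3 - 2 * √2) * R) ^ 2 := by
    linear_combination (-4) * R ^ 2 * h2
  rw [div_le_iff₀ (mul_pos hR hsub), ← sub_nonneg, hsq]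
  exact sq_nonneg _

namespace IsTriangle

variable {a b c : ℝ} (h : IsTriangle a b c)
include h

local notation "𝓈" => semiperimeter a b c
local notation "𝓇" => inradius a b c
local notation "𝓡" => circumradius a b c

theorem semiperimeter_sub_pos : 0 < 𝓈 - a ∧ 0 < 𝓈 - b ∧ 0 < 𝓈 - c := by
  obtain ⟨ha, hb, hc⟩ := h
  simp only [semiperimeter]
  refine ⟨?_, ?_, ?_⟩ <;> linarith

theorem sides_pos : 0 < a ∧ 0 < b ∧ 0 < c := by
  obtain ⟨ha, hb, hc⟩ := h
  refine ⟨?_, ?_, ?_⟩ <;> linarith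

theorem semiperimeter_pos : 0 < 𝓈 := by
  obtain ⟨ha, hb, hc⟩ := h.sides_pos
  unfold semiperimeter
  positivity

theorem inradius_pos : 0 < 𝓇 := by
  obtain ⟨ha, hb, hc⟩ := h.semiperimeter_sub_pos
  have hs := h.semiperimeter_pos
  unfold inradius
  positivity

theorem circumradius_pos : 0 < 𝓡 := by
  obtain ⟨ha, hb, hc⟩ := h.sides_pos
  have hs := h.semiperimeter_pos
  have hr := h.inradius_pos
  unfold circumradius
  positivity

theorem mul_mul_eq_circumradius_mul : a * b * c = 4 * 𝓡 * 𝓇 * 𝓈 := by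
  have hs := h.semiperimeter_pos
  have hr := h.inradius_pos
  rw [circumradius]
  field_simp

theorem heron_pos : 0 < (a + b + c) * (b + c - a) * (c + a - b) * (a + b - c) := by
  obtain ⟨ha, hb, hc⟩ := h.sides_pos
  have hbca := sub_pos.2 h.lt_add_left
  have hcab := sub_pos.2 h.lt_add_mid
  have habc := sub_pos.2 h.lt_add_right
  positivity

theorem semiperimeter_sub_mul_mul_eq : (𝓈 - a) * (𝓈 - b) * (𝓈 - c) = 𝓇 ^ 2 * 𝓈 := by
  obtain ⟨ha, hb, hc⟩ := h.semiperimeter_sub_pos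
  have hs := h.semiperimeter_pos
  rw [inradius, sq_sqrt (by positivity)]
  field_simp

theorem circumradius_sq :
    𝓡 ^ 2 =
      (a * b * c) ^ 2 / ((a + b + c) * (b + c - a) * (c + a - b) * (a + b - c)) := by
  have heron : (a + b + c) * (b + c - a) * (c + a - b) * (a + b - c) =
      (4 * 𝓇 * 𝓈) ^ 2 := by
    have perimeter : 𝓈 = (a + b + c) / 2 := rfl
    calc (a + b + c) * (b + c - a) * (c + a - b) * (a + b - c)
        = 16 * 𝓈 * ((𝓈 - a) * (𝓈 - b) * (𝓈 - c)) := by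
          rw [perimeter]; ring
      _ = (4 * 𝓇 * 𝓈) ^ 2 := by
          rw [h.semiperimeter_sub_mul_mul_eq]; ring
  rw [circumradius, div_pow, heron]

theorem semiperimeter_sub_mul_add_mul_add_mul_eq :
    (𝓈 - a) * (𝓈 - b) + (𝓈 - b) * (𝓈 - c) + (𝓈 - c) * (𝓈 - a) =
      𝓇 * (4 * 𝓡 + 𝓇) := by
  apply mul_left_cancel₀ h.semiperimeter_pos.ne'
  have perimeter : 2 * 𝓈 = a + b + c := by rw [semiperimeter]; ring
  linear_combination h.mul_mul_eq_circumradius_mul + h.semiperimeter_sub_mul_mul_eq +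
    𝓈 ^ 2 * perimeter

theorem semiperimeter_sub_mul_sq_add_eq :
    (𝓈 - a) * a ^ 2 + (𝓈 - b) * b ^ 2 + (𝓈 - c) * c ^ 2 = 4 * 𝓇 * 𝓈 * (𝓡 + 𝓇) := by
  calc (𝓈 - a) * a ^ 2 + (𝓈 - b) * b ^ 2 + (𝓈 - c) * c ^ 2
      = 𝓈 * ((𝓈 - a) * (𝓈 - b) + (𝓈 - b) * (𝓈 - c) + (𝓈 - c) * (𝓈 - a)) +
          3 * ((𝓈 - a) * (𝓈 - b) * (𝓈 - c)) := by rw [semiperimeter]; ring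
    _ = 4 * 𝓇 * 𝓈 * (𝓡 + 𝓇) := by
        rw [h.semiperimeter_sub_mul_add_mul_add_mul_eq, h.semiperimeter_sub_mul_mul_eq]
        ring

theorem two_mul_inradius_le_circumradius : 2 * 𝓇 ≤ 𝓡 := by
  obtain ⟨hsa, hsb, hsc⟩ := h.semiperimeter_sub_pos
  have hs := h.semiperimeter_pos
  have hr := h.inradius_pos
  have eight_mul_le : 8 * ((𝓈 - a) * (𝓈 - b) * (𝓈 - c)) ≤ a * b * c := by
    have hdiff : a * b * c - 8 * ((𝓈 - a) * (𝓈 - b) * (𝓈 - c)) =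
        (𝓈 - a) * (b - c) ^ 2 + (𝓈 - b) * (c - a) ^ 2 + (𝓈 - c) * (a - b) ^ 2 := by
      rw [semiperimeter]; ring
    rw [← sub_nonneg, hdiff]
    positivity
  rw [h.semiperimeter_sub_mul_mul_eq, h.mul_mul_eq_circumradius_mul] at eight_mul_le
  refine le_of_mul_le_mul_left ?_ (show 0 < 4 * 𝓇 * 𝓈 by positivity)
  linarith

theorem three_mul_semiperimeter_sq_le : 3 * 𝓈 ^ 2 ≤ (4 * 𝓡 + 𝓇) ^ 2 := by
  have three_mul_le (x y z : ℝ) :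
      3 * ((x + y + z) * (x * y * z)) ≤ (x * y + y * z + z * x) ^ 2 := by
    nlinarith [sq_nonneg (x * y - y * z), sq_nonneg (y * z - z * x), sq_nonneg (z * x - x * y)]
  have hvieta := three_mul_le (𝓈 - a) (𝓈 - b) (𝓈 - c)
  have hsum : 𝓈 - a + (𝓈 - b) + (𝓈 - c) = 𝓈 := by rw [semiperimeter]; ring
  rw [hsum, h.semiperimeter_sub_mul_mul_eq, h.semiperimeter_sub_mul_add_mul_add_mul_eq] at hvieta
  refine le_of_mul_le_mul_left ?_ (pow_pos h.inradius_pos 2)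
  linarith

/-- The discriminant of the cubic with roots `s - a`, `s - b`, `s - c`, written in `s`, `r`, `R`. -/
theorem sq_sub_mul_sub_mul_sub_eq :
    ((a - b) * (b - c) * (c - a)) ^ 2 =
      4 * 𝓇 ^ 2 *
        (4 * 𝓡 * (𝓡 - 2 * 𝓇) ^ 3 -
          (𝓈 ^ 2 - (2 * 𝓡 ^ 2 + 10 * 𝓡 * 𝓇 - 𝓇 ^ 2)) ^ 2) := by
  have discr_eq (x y z : ℝ) : ((y - x) * (z - y) * (x - z)) ^ 2 =
      (x + y + z) ^ 2 * (x * y + y * z + z * x) ^ 2 - 4 * (x * y + y * z + z * x) ^ 3 -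
        4 * (x + y + z) ^ 3 * (x * y * z) +
        18 * (x + y + z) * (x * y + y * z + z * x) * (x * y * z) - 27 * (x * y * z) ^ 2 := by
    ring
  have hsum : 𝓈 - a + (𝓈 - b) + (𝓈 - c) = 𝓈 := by rw [semiperimeter]; ring
  have hdiscr := discr_eq (𝓈 - a) (𝓈 - b) (𝓈 - c)
  rw [hsum, h.semiperimeter_sub_mul_mul_eq, h.semiperimeter_sub_mul_add_mul_add_mul_eq] at hdiscr
  linear_combination hdiscr

/-- Blundon's inequality, also known as the fundamental triangle inequality. -/
theorem abs_semiperimeter_sq_sub_le :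
    |𝓈 ^ 2 - (2 * 𝓡 ^ 2 + 10 * 𝓡 * 𝓇 - 𝓇 ^ 2)| ≤
      2 * (𝓡 - 2 * 𝓇) * √(𝓡 * (𝓡 - 2 * 𝓇)) := by
  have hR := h.circumradius_pos
  have hr := h.inradius_pos
  have hEuler : 0 ≤ 𝓡 - 2 * 𝓇 := sub_nonneg.2 h.two_mul_inradius_le_circumradius
  refine abs_le_of_sq_le_sq ?_ (by positivity)
  have hdiscr := nonneg_of_mul_nonneg_right
    (h.sq_sub_mul_sub_mul_sub_eq.symm ▸ sq_nonneg ((a - b) * (b - c) * (c - a))) (by positivity)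
  rw [mul_pow, sq_sqrt (by positivity)]
  linarith

theorem gergonne_term_le :
    4 * 𝓈 ^ 2 * 𝓇 * (𝓡 + 𝓇) / (4 * 𝓡 + 𝓇) ^ 2 ≤ 2 * 𝓡 * 𝓇 := by
  have hR := h.circumradius_pos
  have hr := h.inradius_pos
  rw [div_le_iff₀ (by positivity)]
  calc 4 * 𝓈 ^ 2 * 𝓇 * (𝓡 + 𝓇)
      = 4 / 3 * 𝓇 * ((3 * 𝓈 ^ 2) * (𝓡 + 𝓇)) := by ring
    _ ≤ 4 / 3 * 𝓇 * ((4 * 𝓡 + 𝓇) ^ 2 * (3 / 2 * 𝓡)) := by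
        gcongr
        · exact h.three_mul_semiperimeter_sq_le
        · linarith [h.two_mul_inradius_le_circumradius]
    _ = 2 * 𝓡 * 𝓇 * (4 * 𝓡 + 𝓇) ^ 2 := by ring

theorem circumradius_sq_sub_gergonne_term_le :
    𝓡 ^ 2 - 4 * 𝓈 ^ 2 * 𝓇 * (𝓡 + 𝓇) / (4 * 𝓡 + 𝓇) ^ 2 ≤
      ((7 - 4 * √2) * √(𝓡 * (𝓡 - 2 * 𝓇))) ^ 2 := by
  have hR := h.circumradius_pos
  have hr := h.inradius_pos
  have hEuler : 0 ≤ 𝓡 - 2 * 𝓇 := sub_nonneg.2 h.two_mul_inradius_le_circumradius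
  have hd := sqrt_nonneg (𝓡 * (𝓡 - 2 * 𝓇))
  have hd_sq := sq_sqrt (mul_nonneg hR.le hEuler)
  have hBlundon := (abs_le.1 h.abs_semiperimeter_sq_sub_le).1
  set d := √(𝓡 * (𝓡 - 2 * 𝓇))
  have hdR : d < 𝓡 := by nlinarith
  calc 𝓡 ^ 2 - 4 * 𝓈 ^ 2 * 𝓇 * (𝓡 + 𝓇) / (4 * 𝓡 + 𝓇) ^ 2
      ≤ 𝓡 ^ 2 - 4 * (2 * 𝓡 ^ 2 + 10 * 𝓡 * 𝓇 - 𝓇 ^ 2 - 2 * (𝓡 - 2 * 𝓇) * d) * 𝓇 * (𝓡 + 𝓇) /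
          (4 * 𝓡 + 𝓇) ^ 2 := by gcongr; linarith
    _ = ((4 * 𝓡 ^ 2 - 𝓡 * d - d ^ 2) / (𝓡 * (3 * 𝓡 - d)) * d) ^ 2 :=
        sub_gergonne_term_eq_sq hR hdR hd_sq
    _ ≤ ((7 - 4 * √2) * d) ^ 2 := by
        have hnum : 0 ≤ 4 * 𝓡 ^ 2 - 𝓡 * d - d ^ 2 := by nlinarith
        have hden : 0 < 3 * 𝓡 - d := by linarith
        gcongr
        exact div_le_seven_sub hR (by linarith)

end IsTriangle

section Triangle

variable {V : Type*} [NormedAddCommGroup V] [InnerProductSpace ℝ V]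

theorem isTriangle_dist_of_affineIndependent {A B C : V} (h : AffineIndependent ℝ ![A, B, C]) :
    IsTriangle (dist B C) (dist C A) (dist A B) := by
  rw [affineIndependent_iff_not_collinear_set] at h
  refine ⟨?_, ?_, ?_⟩
  · rw [add_comm, dist_comm A B, dist_comm C A, dist_lt_dist_add_dist_iff]
    exact fun hw ↦ h (Set.insert_comm A B {C} ▸ hw.collinear)
  · rw [add_comm, dist_comm B C, dist_comm A B, dist_lt_dist_add_dist_iff]
    exact fun hw ↦ h (by
      rw [Set.insert_comm A B, Set.pair_comm A C, Set.insert_comm B C]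
      exact hw.collinear)
  · rw [add_comm, dist_comm C A, dist_comm B C, dist_lt_dist_add_dist_iff]
    exact fun hw ↦ h (Set.pair_comm C B ▸ hw.collinear)

/-- The center of the triangle `A B C` with barycentric coordinates `f a b c`, `f b c a`, `f c a b`,
where `a = BC`, `b = CA`, `c = AB`: `tcenter` in an arbitrary real inner product space. -/
noncomputable def triangleCenter (f : ℝ → ℝ → ℝ → ℝ) (A B C : V) : V :=
  univ.centerMass
    ![f (dist B C) (dist C A) (dist A B), f (dist C A) (dist A B) (dist B C),
      f (dist A B) (dist B C) (dist C A)] ![A, B, C]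

theorem triangleCenter_eq_tcenter (f : ℝ → ℝ → ℝ → ℝ) (A B C : EuclideanSpace ℝ (Fin 2)) :
    triangleCenter f A B C = tcenter f A B C := by
  simp [triangleCenter, tcenter, bary, centerMass, Fin.sum_univ_three]

/-- The circumcenter `X₃`, through its barycentric coordinates. -/
noncomputable def circumcenter (A B C : V) : V :=
  triangleCenter (fun a b c => a ^ 2 * (a ^ 2 - b ^ 2 - c ^ 2)) A B C

/-- The incenter `X₁`, through its barycentric coordinates. -/
noncomputable def incenter (A B C : V) : V :=
  triangleCenter (fun a _ _ => a) A B C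

/-- The Gergonne point `X₇`, through its barycentric coordinates. -/
noncomputable def gergonnePoint (A B C : V) : V :=
  triangleCenter (fun a b c => (a + b - c) * (a - b + c)) A B C

theorem circumcenter_weight_sum_eq (a b c : ℝ) :
    a ^ 2 * (a ^ 2 - b ^ 2 - c ^ 2) + b ^ 2 * (b ^ 2 - c ^ 2 - a ^ 2) +
        c ^ 2 * (c ^ 2 - a ^ 2 - b ^ 2) =
      -((a + b + c) * (b + c - a) * (c + a - b) * (a + b - c)) := by
  ring

theorem gergonne_numerator_eq (a b c : ℝ) :
    (b + c - a) * (b - c + a) * ((c + a - b) * (c - a + b)) * a ^ 2 +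
        (c + a - b) * (c - a + b) * ((a + b - c) * (a - b + c)) * b ^ 2 +
        (a + b - c) * (a - b + c) * ((b + c - a) * (b - c + a)) * c ^ 2 =
      16 * ((semiperimeter a b c - a) * (semiperimeter a b c - b) * (semiperimeter a b c - c)) *
        ((semiperimeter a b c - a) * a ^ 2 + (semiperimeter a b c - b) * b ^ 2 +
          (semiperimeter a b c - c) * c ^ 2) := by
  rw [semiperimeter]
  ring

variable {A B C : V} (h : IsTriangle (dist B C) (dist C A) (dist A B))
include h

local notation "𝓈" => semiperimeter (dist B C) (dist C A) (dist A B)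
local notation "𝓇" => inradius (dist B C) (dist C A) (dist A B)
local notation "𝓡" => circumradius (dist B C) (dist C A) (dist A B)

theorem dist_sq_circumcenter_vertex (i : Fin 3) :
    dist (![A, B, C] i) (circumcenter A B C) ^ 2 = 𝓡 ^ 2 := by
  have hH := h.heron_pos.ne'
  have hw := neg_ne_zero.2 hH
  rw [← circumcenter_weight_sum_eq] at hw
  rw [h.circumradius_sq, circumcenter, triangleCenter, dist_sq_centerMass_triple hw,
    circumcenter_weight_sum_eq]
  simp only [ne_eq, mul_eq_zero, not_or] at hH
  obtain ⟨⟨⟨h₀, h₁⟩, h₂⟩, h₃⟩ := hH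
  fin_cases i <;>
    simp only [Fin.isValue, Fin.zero_eta, Fin.mk_one, Fin.reduceFinMk, Matrix.cons_val,
      dist_self, dist_comm B A, dist_comm C B, dist_comm A C] <;>
    field_simp <;> ring

theorem dist_sq_circumcenter_centerMass {x y z : ℝ} (hs : x + y + z ≠ 0) :
    dist (circumcenter A B C) (univ.centerMass ![x, y, z] ![A, B, C]) ^ 2 =
      𝓡 ^ 2 -
        (y * z * dist B C ^ 2 + z * x * dist C A ^ 2 + x * y * dist A B ^ 2) / (x + y + z) ^ 2 := by
  have hA := dist_sq_circumcenter_vertex h 0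
  have hB := dist_sq_circumcenter_vertex h 1
  have hC := dist_sq_circumcenter_vertex h 2
  simp only [Matrix.cons_val, dist_comm _ (circumcenter A B C)] at hA hB hC
  rw [dist_sq_centerMass_triple hs, hA, hB, hC]
  field_simp

/-- Euler's theorem in triangle geometry. -/
theorem dist_sq_circumcenter_incenter :
    dist (circumcenter A B C) (incenter A B C) ^ 2 = 𝓡 * (𝓡 - 2 * 𝓇) := by
  have hs := h.semiperimeter_pos
  have perimeter : dist B C + dist C A + dist A B = 2 * 𝓈 := by rw [semiperimeter]; ring
  rw [incenter, triangleCenter, dist_sq_circumcenter_centerMass h (by rw [perimeter]; positivity)]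
  have numerator : dist C A * dist A B * dist B C ^ 2 + dist A B * dist B C * dist C A ^ 2 +
      dist B C * dist C A * dist A B ^ 2 = 4 * 𝓡 * 𝓇 * 𝓈 * (2 * 𝓈) := by
    rw [← h.mul_mul_eq_circumradius_mul, ← perimeter]
    ring
  rw [numerator, perimeter]
  field_simp
  ring

theorem dist_sq_circumcenter_gergonnePoint :
    dist (circumcenter A B C) (gergonnePoint A B C) ^ 2 =
      𝓡 ^ 2 - 4 * 𝓈 ^ 2 * 𝓇 * (𝓡 + 𝓇) / (4 * 𝓡 + 𝓇) ^ 2 := by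
  have hr := h.inradius_pos
  have hR := h.circumradius_pos
  have weight_sum : (dist B C + dist C A - dist A B) * (dist B C - dist C A + dist A B) +
      (dist C A + dist A B - dist B C) * (dist C A - dist A B + dist B C) +
      (dist A B + dist B C - dist C A) * (dist A B - dist B C + dist C A) =
        4 * (𝓇 * (4 * 𝓡 + 𝓇)) := by
    rw [← h.semiperimeter_sub_mul_add_mul_add_mul_eq, semiperimeter]
    ring
  rw [gergonnePoint, triangleCenter,
    dist_sq_circumcenter_centerMass h (by rw [weight_sum]; positivity), weight_sum,
    gergonne_numerator_eq, h.semiperimeter_sub_mul_mul_eq, h.semiperimeter_sub_mul_sq_add_eq]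
  field_simp
  ring

theorem dist_circumcenter_incenter_le :
    dist (circumcenter A B C) (incenter A B C) ≤
      dist (circumcenter A B C) (gergonnePoint A B C) := by
  refine le_of_sq_le_sq ?_ dist_nonneg
  rw [dist_sq_circumcenter_incenter h, dist_sq_circumcenter_gergonnePoint h]
  linarith [h.gergonne_term_le]

theorem dist_circumcenter_gergonnePoint_le :
    dist (circumcenter A B C) (gergonnePoint A B C) ≤
      (7 - 4 * √2) * dist (circumcenter A B C) (incenter A B C) := by
  have hc : 0 ≤ 7 - 4 * √2 := by linarith [sqrt_two_lt_three_halves]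
  refine le_of_sq_le_sq ?_ (by positivity)
  rw [← sqrt_sq (dist_nonneg (x := circumcenter A B C) (y := incenter A B C)),
    dist_sq_circumcenter_incenter h, dist_sq_circumcenter_gergonnePoint h]
  exact h.circumradius_sq_sub_gergonne_term_le

end Triangle

theorem stmt_14_general {V : Type*} [NormedAddCommGroup V] [InnerProductSpace ℝ V] {A B C : V}
    (h : AffineIndependent ℝ ![A, B, C]) :
    (7 + 4 * √2) / 17 * dist (circumcenter A B C) (gergonnePoint A B C) ≤
        dist (circumcenter A B C) (incenter A B C) ∧
      dist (circumcenter A B C) (incenter A B C) ≤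
        dist (circumcenter A B C) (gergonnePoint A B C) := by
  have hABC := isTriangle_dist_of_affineIndependent h
  refine ⟨?_, dist_circumcenter_incenter_le hABC⟩
  have hinv : (7 + 4 * √2) / 17 * (7 - 4 * √2) = 1 := by
    linear_combination (-16 / 17) * sq_sqrt (zero_le_two (α := ℝ))
  calc (7 + 4 * √2) / 17 * dist (circumcenter A B C) (gergonnePoint A B C)
      ≤ (7 + 4 * √2) / 17 * ((7 - 4 * √2) * dist (circumcenter A B C) (incenter A B C)) := by
        gcongr
        exact dist_circumcenter_gergonnePoint_le hABC
    _ = dist (circumcenter A B C) (incenter A B C) := by rw [← mul_assoc, hinv, one_mul]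

theorem stmt_14 (A B C : EuclideanSpace ℝ (Fin 2))
    (h : AffineIndependent ℝ ![A, B, C]) :
    ((7 + 4 * Real.sqrt 2)/17) * dist (tcenter (fun a b c => a^2*(a^2 - b^2 - c^2)) A B C) (tcenter (fun a b c => (a + b - c)*(a - b + c)) A B C) ≤ dist (tcenter (fun a b c => a^2*(a^2 - b^2 - c^2)) A B C) (tcenter (fun a b c => a) A B C) ∧
      dist (tcenter (fun a b c => a^2*(a^2 - b^2 - c^2)) A B C) (tcenter (fun a b c => a) A B C) ≤ dist (tcenter (fun a b c => a^2*(a^2 - b^2 - c^2)) A B C) (tcenter (fun a b c => (a + b - c)*(a - b + c)) A B C) := by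
  simpa only [circumcenter, incenter, gergonnePoint, triangleCenter_eq_tcenter]
    using stmt_14_general h
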